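/- Suppose P is a proper real-rational n×n transfer matrix that is negative imaginary (NI) without poles at the origin, C is strictly negative imaginary (SNI), and either P(∞) ≥ 0 or C(∞) ≥ 0 (positive semidefinite). If the largest eigenvalue of P(0)C(0) is less than 1 and the largest eigenvalue of P(∞)C(∞) is less than 1, then the positive feedback interconnection [P, C] is stable. -/

import Mathlib

open Matrix Polynomial Filter Topology
open scoped ComplexOrder

noncomputable section

namespace NIControl

/-- Evaluate a real-rational function at a complex point (junk value at poles). -/
def evalC (f : RatFunc ℝ) (s : ℂ) : ℂ :=
  f.eval (algebraMap ℝ ℂ) s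

/-- `s` is a pole of the real-rational function `f`
(the reduced denominator vanishes at `s`). -/
def IsPoleAt (f : RatFunc ℝ) (s : ℂ) : Prop :=
  f.denom.eval₂ (algebraMap ℝ ℂ) s = 0

variable {n : ℕ}

/-- Pointwise evaluation of a real-rational transfer matrix at a complex point. -/
def evalM (G : Matrix (Fin n) (Fin n) (RatFunc ℝ)) (s : ℂ) : Matrix (Fin n) (Fin n) ℂ :=
  Matrix.of fun i j => evalC (G i j) s

/-- Pointwise evaluation of a real-rational transfer matrix at a real point. -/
def evalR (G : Matrix (Fin n) (Fin n) (RatFunc ℝ)) (x : ℝ) : Matrix (Fin n) (Fin n) ℝ :=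
  Matrix.of fun i j => (G i j).eval (RingHom.id ℝ) x

/-- Value at `s = ∞` of a proper real-rational function. -/
def atInfinity (f : RatFunc ℝ) : ℝ :=
  if f.num.degree = f.denom.degree then f.num.leadingCoeff / f.denom.leadingCoeff else 0

/-- The instantaneous gain `G(∞)` of a proper real-rational transfer matrix. -/
def evalInf (G : Matrix (Fin n) (Fin n) (RatFunc ℝ)) : Matrix (Fin n) (Fin n) ℝ :=
  Matrix.of fun i j => atInfinity (G i j)

/-- The matrix `G` has a pole at `s`. -/
def HasPole (G : Matrix (Fin n) (Fin n) (RatFunc ℝ)) (s : ℂ) : Prop :=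
  ∃ i j, IsPoleAt (G i j) s

/-- All entries of `G` are proper rational functions. -/
def Proper (G : Matrix (Fin n) (Fin n) (RatFunc ℝ)) : Prop :=
  ∀ i j, (G i j).num.degree ≤ (G i j).denom.degree

/-- All entries of `G` are strictly proper rational functions. -/
def StrictlyProper (G : Matrix (Fin n) (Fin n) (RatFunc ℝ)) : Prop :=
  ∀ i j, (G i j).num.degree < (G i j).denom.degree

/-- The pole of `G` at the origin (if any) is at most simple. -/
def NoDoubleOriginPole (G : Matrix (Fin n) (Fin n) (RatFunc ℝ)) : Prop :=
  ∀ i j, (G i j).denom.rootMultiplicity 0 ≤ 1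

/-- Membership in `RH∞`: proper and no poles in the closed right-half complex plane. -/
def MemRHinf {m : Type*} [Fintype m] (G : Matrix m m (RatFunc ℝ)) : Prop :=
  (∀ i j, (G i j).num.degree ≤ (G i j).denom.degree) ∧
  ∀ s : ℂ, 0 ≤ s.re → ∀ i j, ¬ IsPoleAt (G i j) s

/-- The point `jω` on the imaginary axis. -/
def jw (ω : ℝ) : ℂ := Complex.I * (ω : ℂ)

/-- The negative-imaginary frequency kernel `j (M − M*)`. -/
def niKer (M : Matrix (Fin n) (Fin n) ℂ) : Matrix (Fin n) (Fin n) ℂ :=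
  Complex.I • (M - Mᴴ)

/-- Negative imaginary (NI) real-rational transfer matrix. -/
def IsNI (G : Matrix (Fin n) (Fin n) (RatFunc ℝ)) : Prop :=
  Proper G ∧
  (∀ s : ℂ, 0 < s.re → ¬ HasPole G s) ∧
  (∀ ω : ℝ, 0 < ω → ¬ HasPole G (jw ω) → (niKer (evalM G (jw ω))).PosSemidef) ∧
  (∀ ω : ℝ, 0 < ω → HasPole G (jw ω) →
    ∃ R : Matrix (Fin n) (Fin n) ℂ, R.PosSemidef ∧
      Tendsto (fun s : ℂ => (s - jw ω) • Complex.I • evalM G s) (𝓝[≠] jw ω) (𝓝 R)) ∧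
  (HasPole G 0 →
    (∀ k : ℕ, 3 ≤ k → Tendsto (fun s : ℂ => s ^ k • evalM G s) (𝓝[≠] 0) (𝓝 0)) ∧
    ∃ R : Matrix (Fin n) (Fin n) ℂ, R.PosSemidef ∧
      Tendsto (fun s : ℂ => s ^ 2 • evalM G s) (𝓝[≠] 0) (𝓝 R))

/-- Strictly negative imaginary (SNI) real-rational transfer matrix. -/
def IsSNI (G : Matrix (Fin n) (Fin n) (RatFunc ℝ)) : Prop :=
  MemRHinf G ∧ ∀ ω : ℝ, 0 < ω → (niKer (evalM G (jw ω))).PosDef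

/-- Positive real (passive) real-rational transfer matrix. -/
def IsPositiveReal (G : Matrix (Fin n) (Fin n) (RatFunc ℝ)) : Prop :=
  MemRHinf G ∧ ∀ ω : ℝ, 0 ≤ ω → (evalM G (jw ω) + (evalM G (jw ω))ᴴ).PosSemidef

/-- Output strictly passive real-rational transfer matrix. -/
def IsOSP (G : Matrix (Fin n) (Fin n) (RatFunc ℝ)) : Prop :=
  MemRHinf G ∧ ∃ ε : ℝ, 0 < ε ∧ ∀ ω : ℝ, 0 ≤ ω →
    (evalM G (jw ω) + (evalM G (jw ω))ᴴ -
      (ε : ℂ) • ((evalM G (jw ω))ᴴ * evalM G (jw ω))).PosSemidef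

/-- Stability of the positive feedback interconnection `[P, C]`:
`[I; C] (I − P C)⁻¹ [I, P] ∈ RH∞`. -/
def FeedbackStable (P C : Matrix (Fin n) (Fin n) (RatFunc ℝ)) : Prop :=
  ((1 : Matrix (Fin n) (Fin n) (RatFunc ℝ)) - P * C).det ≠ 0 ∧
  MemRHinf (Matrix.fromBlocks
    (1 - P * C)⁻¹ ((1 - P * C)⁻¹ * P)
    (C * (1 - P * C)⁻¹) (C * (1 - P * C)⁻¹ * P))

/-- All eigenvalues of the complex matrix `M` are real and less than `c`. -/
def eigsRealAndLT (M : Matrix (Fin n) (Fin n) ℂ) (c : ℝ) : Prop :=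
  ∀ μ ∈ spectrum ℂ M, μ.im = 0 ∧ μ.re < c

/-- The (real) eigenvalues of the real matrix `M` are all real and its largest
eigenvalue is less than `c`. -/
def maxEigLT (M : Matrix (Fin n) (Fin n) ℝ) (c : ℝ) : Prop :=
  eigsRealAndLT (M.map (Complex.ofReal)) c

/-- Loewner order `A ≤ B` on real matrices. -/
def LoewnerLE (A B : Matrix (Fin n) (Fin n) ℝ) : Prop := (B - A).PosSemidef

/-- Strict Loewner order `A < B` on real matrices. -/
def LoewnerLT (A B : Matrix (Fin n) (Fin n) ℝ) : Prop := (B - A).PosDef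

/-!
Along the imaginary axis the negative imaginary kernel `j (M - M*)` of `τ P - C⁻¹` is bounded
below by a positive constant for every `τ ∈ [0, 1]`: congruence by `C⁻¹` turns the strict
inequality for `C` into one for `-C⁻¹`, and `τ P` only adds a nonnegative term, even next to a pole
`jω` of `P`, where the positive semidefinite residue has the right sign on the right-hand side.
Hence `1 - τ P C = -(τ P - C⁻¹) C` is nonsingular near every `jω ≠ 0` in the open right half-plane,
and `(P - C⁻¹)⁻¹` is bounded there, so the closed loop has no pole at `jω`. Near `0` and near `∞`
nonsingularity for all `τ` says that `P(0) C(0)` and `P(∞) C(∞)` have no real eigenvalue `≥ 1`.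
So the zeros of `det (1 - τ P C)` in the open right half-plane stay in a compact subset as `τ`
varies; as there are none for `τ = 0`, there are none for `τ = 1`.
-/

/-! ### Evaluation of rational functions at points of the complex plane -/

section Evaluation

variable {f : RatFunc ℝ} {s : ℂ}

lemma not_isPoleAt_of_denom_dvd {q : ℝ[X]} (hfq : f.denom ∣ q) (hq : aeval s q ≠ 0) :
    ¬ IsPoleAt f s :=
  fun h => hq (eval₂_eq_zero_of_dvd_of_eval₂_eq_zero _ _ hfq h)

lemma isPoleAt_neg : IsPoleAt (-f) s ↔ IsPoleAt f s := by
  have not_pole_neg (h : RatFunc ℝ) (hh : ¬ IsPoleAt h s) : ¬ IsPoleAt (-h) s := by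
    refine not_isPoleAt_of_denom_dvd (q := h.denom) ?_ hh
    have hdvd := RatFunc.denom_mul_dvd (-1) h
    rwa [show (-1 : RatFunc ℝ) = RatFunc.C (-1) by simp, RatFunc.denom_C, one_mul, map_neg,
      map_one, neg_one_mul] at hdvd
  exact not_iff_not.1 ⟨fun h => neg_neg f ▸ not_pole_neg (-f) h, not_pole_neg f⟩

variable (s) in
/-- The ring of real-rational functions without a pole at `s`. -/
def regularSubring : Subring (RatFunc ℝ) where
  carrier := {f | ¬ IsPoleAt f s}
  zero_mem' := by simp [IsPoleAt]
  one_mem' := by simp [IsPoleAt]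
  neg_mem' hf := isPoleAt_neg.not.2 hf
  add_mem' hf hg := not_isPoleAt_of_denom_dvd (RatFunc.denom_add_dvd _ _)
    (by rw [map_mul]; exact mul_ne_zero hf hg)
  mul_mem' hf hg := not_isPoleAt_of_denom_dvd (RatFunc.denom_mul_dvd _ _)
    (by rw [map_mul]; exact mul_ne_zero hf hg)

variable (s) in
/-- `evalC` at `s` as a ring homomorphism; this needs the poles at `s` to be excluded. -/
def evalHom : regularSubring s →+* ℂ where
  toFun f := evalC f s
  map_zero' := RatFunc.eval_zero _ _
  map_one' := RatFunc.eval_one _ _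
  map_add' f g := RatFunc.eval_add _ _ f.2 g.2
  map_mul' f g := RatFunc.eval_mul _ _ f.2 g.2

lemma inv_mem_regularSubring (hfs : evalC f s ≠ 0) : f⁻¹ ∈ regularSubring s := by
  have hf : f ≠ 0 := by rintro rfl; exact hfs (RatFunc.eval_zero _ _)
  exact not_isPoleAt_of_denom_dvd (RatFunc.denom_inv_dvd hf) (div_ne_zero_iff.1 hfs).1

instance : IsLocalHom (evalHom s) where
  map_nonunit f hf := by
    have hfs : evalC f s ≠ 0 := hf.ne_zero
    have hf0 : (f : RatFunc ℝ) ≠ 0 := by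
      intro h
      exact hfs (by rw [h]; exact RatFunc.eval_zero _ _)
    exact IsUnit.of_mul_eq_one ⟨_, inv_mem_regularSubring hfs⟩ (Subtype.ext (mul_inv_cancel₀ hf0))

lemma differentiableAt_evalC (hf : ¬ IsPoleAt f s) : DifferentiableAt ℂ (evalC f) s :=
  (Polynomial.differentiable_aeval _ _).fun_div (Polynomial.differentiable_aeval _ _) hf

lemma eventually_cofinite_aeval_ne_zero {p : ℝ[X]} (hp : p ≠ 0) :
    ∀ᶠ s : ℂ in cofinite, aeval s p ≠ 0 := by
  have hroots := finite_setOfPred_isRoot (p := p.map (algebraMap ℝ ℂ)) (map_ne_zero hp)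
  refine eventually_cofinite.2 (hroots.subset fun s hs => ?_)
  simpa [IsRoot, eval_map_algebraMap] using hs

lemma eventually_cofinite_not_isPoleAt (f : RatFunc ℝ) : ∀ᶠ s in cofinite, ¬ IsPoleAt f s :=
  eventually_cofinite_aeval_ne_zero f.denom_ne_zero

lemma tendsto_evalC_cobounded_of_isPoleAt (hf : IsPoleAt f s) :
    Tendsto (evalC f) (𝓝[≠] s) (Bornology.cobounded ℂ) := by
  have hnum : aeval s f.num ≠ 0 := by
    intro h
    obtain ⟨u, v, huv⟩ := f.isCoprime_num_denom
    simpa [h, show aeval s f.denom = 0 from hf] using congrArg (aeval s) huv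
  have hdenom : Tendsto (fun z : ℂ => aeval z f.denom) (𝓝[≠] s) (𝓝[≠] 0) := by
    refine tendsto_nhdsWithin_iff.2 ⟨?_, nhdsNE_le_cofinite s
      (eventually_cofinite_aeval_ne_zero f.denom_ne_zero)⟩
    exact (show aeval s f.denom = 0 from hf) ▸
      (Polynomial.continuous_aeval f.denom).continuousWithinAt
  rw [← tendsto_norm_atTop_iff_cobounded]
  have hinv := tendsto_norm_atTop_iff_cobounded.2 (tendsto_inv₀_nhdsNE_zero.comp hdenom)
  have hnorm := ((Polynomial.continuous_aeval f.num).tendsto s).norm.mono_left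
    (nhdsWithin_le_nhds (s := {s}ᶜ))
  exact (hnorm.pos_mul_atTop (norm_pos_iff.2 hnum) hinv).congr fun z => by
    simp only [Function.comp_apply, ← norm_mul, ← div_eq_mul_inv]
    rfl

lemma not_isPoleAt_of_frequently_norm_le {B : ℝ}
    (hB : ∃ᶠ z in 𝓝[≠] s, ‖evalC f z‖ ≤ B) : ¬ IsPoleAt f s := fun hf =>
  hB <| ((tendsto_norm_atTop_iff_cobounded.2
    (tendsto_evalC_cobounded_of_isPoleAt hf)).eventually_gt_atTop B).mono fun _ => not_le.2

lemma aeval_conj (p : ℝ[X]) (s : ℂ) :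
    aeval (starRingEnd ℂ s) p = starRingEnd ℂ (aeval s p) := by
  simpa using aeval_algHom_apply (Complex.conjAe : ℂ →ₐ[ℝ] ℂ) s p

lemma evalC_conj (f : RatFunc ℝ) (s : ℂ) :
    evalC f (starRingEnd ℂ s) = starRingEnd ℂ (evalC f s) := by
  change aeval _ f.num / aeval _ f.denom = starRingEnd ℂ (aeval s f.num / aeval s f.denom)
  rw [aeval_conj, aeval_conj, map_div₀]

lemma isPoleAt_conj : IsPoleAt f (starRingEnd ℂ s) ↔ IsPoleAt f s := by
  change aeval _ f.denom = 0 ↔ aeval _ f.denom = 0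
  rw [aeval_conj, map_eq_zero]

lemma evalC_ofReal (f : RatFunc ℝ) (x : ℝ) :
    evalC f x = (f.eval (RingHom.id ℝ) x : ℝ) := by
  have haeval (p : ℝ[X]) : aeval (x : ℂ) p = (p.eval x : ℝ) := by
    simpa using aeval_algebraMap_apply ℂ x p
  change aeval _ f.num / aeval _ f.denom = _
  rw [haeval, haeval, RatFunc.eval, Complex.ofReal_div]
  rfl

end Evaluation

/-! ### Proper rational functions and evaluation at infinity -/

section Infinity

variable {f : RatFunc ℝ}

lemma degree_num_le_degree_denom_iff :
    f.num.degree ≤ f.denom.degree ↔ f.intDegree ≤ 0 := by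
  rcases eq_or_ne f 0 with rfl | hf
  · simp
  · rw [degree_eq_natDegree (RatFunc.num_ne_zero hf), degree_eq_natDegree f.denom_ne_zero,
      Nat.cast_le, RatFunc.intDegree, sub_nonpos, Nat.cast_le]

lemma tendsto_aeval_div_pow_cobounded {p : ℝ[X]} {d : ℕ} (hd : p.natDegree ≤ d) :
    Tendsto (fun s : ℂ => aeval s p / s ^ d) (Bornology.cobounded ℂ) (𝓝 (p.coeff d : ℂ)) := by
  have hreflect : aeval (0 : ℂ) (p.reflect d) = (p.coeff d : ℂ) := by
    rw [← coeff_zero_eq_aeval_zero', coeff_reflect, revAt_le d.zero_le, Nat.sub_zero]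
    rfl
  have hlim := ((Polynomial.continuous_aeval (A := ℂ) (p.reflect d)).tendsto 0).comp
    (tendsto_inv₀_cobounded (α := ℂ))
  rw [hreflect] at hlim
  refine hlim.congr' ?_
  filter_upwards [Bornology.eventually_ne_cobounded (0 : ℂ)] with s hs
  let _ := invertibleOfNonzero hs
  rw [eq_div_iff (pow_ne_zero _ hs)]
  simpa [aeval_def] using eval₂_reflect_mul_pow (algebraMap ℝ ℂ) s d p hd

lemma coeff_div_leadingCoeff_eq_atInfinity (hf : f.num.degree ≤ f.denom.degree) :
    f.num.coeff f.denom.natDegree / f.denom.leadingCoeff = atInfinity f := by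
  unfold atInfinity
  split_ifs with h
  · rw [← natDegree_eq_of_degree_eq h, coeff_natDegree]
  · have hlt := lt_of_le_of_ne hf h
    rw [degree_eq_natDegree f.denom_ne_zero] at hlt
    rw [coeff_eq_zero_of_degree_lt hlt, zero_div]

lemma tendsto_evalC_cobounded (hf : f.num.degree ≤ f.denom.degree) :
    Tendsto (evalC f) (Bornology.cobounded ℂ) (𝓝 (atInfinity f : ℂ)) := by
  have hlead : (f.denom.coeff f.denom.natDegree : ℂ) ≠ 0 := by simpa using f.denom_ne_zero
  have hlim := (tendsto_aeval_div_pow_cobounded (natDegree_le_natDegree hf)).div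
    (tendsto_aeval_div_pow_cobounded le_rfl) hlead
  rw [coeff_natDegree, ← Complex.ofReal_div, coeff_div_leadingCoeff_eq_atInfinity hf] at hlim
  refine hlim.congr' ?_
  filter_upwards [Bornology.eventually_ne_cobounded (0 : ℂ)] with s hs
  exact div_div_div_cancel_right₀ (pow_ne_zero _ hs) _ _

open scoped Classical in
/-- The ring of proper real-rational functions. -/
def properSubring : Subring (RatFunc ℝ) := (RatFunc.inftyValuation ℝ).integer

lemma mem_properSubring : f ∈ properSubring ↔ f.num.degree ≤ f.denom.degree := by
  classical
  rw [degree_num_le_degree_denom_iff, properSubring, Valuation.mem_integer_iff,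
    RatFunc.inftyValuation_apply]
  rcases eq_or_ne f 0 with rfl | hf
  · simp [RatFunc.inftyValuationDef]
  · rw [RatFunc.inftyValuation_of_nonzero ℝ hf, ← WithZero.exp_zero, WithZero.exp_le_exp]

lemma tendsto_evalC_properSubring (f : properSubring) :
    Tendsto (evalC f) (Bornology.cobounded ℂ) (𝓝 (atInfinity f : ℂ)) :=
  tendsto_evalC_cobounded (mem_properSubring.1 f.2)

/-- The value at infinity as a ring homomorphism on proper functions. -/
def atInfinityHom : properSubring →+* ℝ where
  toFun f := atInfinity f
  map_zero' := by simp [atInfinity]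
  map_one' := by simp [atInfinity]
  map_add' f g := by
    rw [← Complex.ofReal_inj, Complex.ofReal_add]
    refine tendsto_nhds_unique ((tendsto_evalC_properSubring (f + g)).congr' ?_)
      ((tendsto_evalC_properSubring f).add (tendsto_evalC_properSubring g))
    filter_upwards [Bornology.le_cofinite ℂ (eventually_cofinite_not_isPoleAt f),
      Bornology.le_cofinite ℂ (eventually_cofinite_not_isPoleAt g)] with s hf hg
    exact RatFunc.eval_add _ _ hf hg
  map_mul' f g := by
    rw [← Complex.ofReal_inj, Complex.ofReal_mul]
    refine tendsto_nhds_unique ((tendsto_evalC_properSubring (f * g)).congr' ?_)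
      ((tendsto_evalC_properSubring f).mul (tendsto_evalC_properSubring g))
    filter_upwards [Bornology.le_cofinite ℂ (eventually_cofinite_not_isPoleAt f),
      Bornology.le_cofinite ℂ (eventually_cofinite_not_isPoleAt g)] with s hf hg
    exact RatFunc.eval_mul _ _ hf hg

instance : IsLocalHom atInfinityHom where
  map_nonunit f hf := by
    have hdeg : (f : RatFunc ℝ).num.degree = (f : RatFunc ℝ).denom.degree :=
      of_not_not fun h => hf.ne_zero (if_neg h)
    have hf0 : (f : RatFunc ℝ) ≠ 0 := by
      intro h
      simp [h] at hdeg
    have hinv : (f : RatFunc ℝ)⁻¹ ∈ properSubring := by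
      rw [mem_properSubring, degree_num_le_degree_denom_iff, RatFunc.intDegree_inv,
        RatFunc.intDegree, natDegree_eq_of_degree_eq hdeg, sub_self, neg_zero]
    exact IsUnit.of_mul_eq_one ⟨_, hinv⟩ (Subtype.ext (mul_inv_cancel₀ hf0))

end Infinity

/-! ### The closed loop over a ring with a residue field -/

section ClosedLoop

variable {m R K k : Type*} [Fintype m] [DecidableEq m] [CommRing R] [Field K] [Field k]

lemma mapMatrix_nonsing_inv {S : Type*} [CommRing S] (φ : R →+* S) {M : Matrix m m R}
    (hM : IsUnit M.det) : φ.mapMatrix M⁻¹ = (φ.mapMatrix M)⁻¹ :=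
  (inv_eq_right_inv (by rw [← map_mul, mul_nonsing_inv _ hM, map_one])).symm

lemma exists_mapMatrix_subtype_eq {S : Subring R} {G : Matrix m m R} (hG : G ∈ S.matrix) :
    ∃ G' : Matrix m m S, S.subtype.mapMatrix G' = G :=
  ⟨of fun i j => ⟨G i j, hG i j⟩, rfl⟩

lemma isUnit_det_of_isLocalHom (φ : R →+* k) [IsLocalHom φ] {G : Matrix m m R}
    (hG : (φ.mapMatrix G).det ≠ 0) : IsUnit G.det := by
  rw [← RingHom.map_det] at hG
  exact isUnit_of_map_unit φ _ hG.isUnit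

lemma nonsing_inv_mem_matrix {S : Subring K} {G : Matrix m m S} (hG : IsUnit G.det) :
    (S.subtype.mapMatrix G)⁻¹ ∈ S.matrix := by
  rw [← mapMatrix_nonsing_inv _ hG]
  exact fun i j => (G⁻¹ i j).2

lemma fromBlocks_mem_matrix {S : Subring R} {A B C D : Matrix m m R} (hA : A ∈ S.matrix)
    (hB : B ∈ S.matrix) (hC : C ∈ S.matrix) (hD : D ∈ S.matrix) :
    fromBlocks A B C D ∈ S.matrix := by
  rintro (i | i) (j | j)
  exacts [hA i j, hB i j, hC i j, hD i j]

/-- The closed-loop transfer matrix `[I; C] (I − P C)⁻¹ [I, P]` of the positive feedback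
interconnection of `P` and `C`. -/
def closedLoop (P C : Matrix m m R) : Matrix (m ⊕ m) (m ⊕ m) R :=
  fromBlocks (1 - P * C)⁻¹ ((1 - P * C)⁻¹ * P) (C * (1 - P * C)⁻¹) (C * (1 - P * C)⁻¹ * P)

lemma closedLoop_mem_matrix {S : Subring R} {P C : Matrix m m R} (hP : P ∈ S.matrix)
    (hC : C ∈ S.matrix) (hinv : (1 - P * C)⁻¹ ∈ S.matrix) : closedLoop P C ∈ S.matrix :=
  fromBlocks_mem_matrix hinv (mul_mem hinv hP) (mul_mem hC hinv) (mul_mem (mul_mem hC hinv) hP)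

lemma closedLoop_mem_matrix_of_isLocalHom {S : Subring K} (φ : S →+* k) [IsLocalHom φ]
    {P C : Matrix m m S} (h : (1 - φ.mapMatrix P * φ.mapMatrix C).det ≠ 0) :
    (1 - S.subtype.mapMatrix P * S.subtype.mapMatrix C).det ≠ 0 ∧
      closedLoop (S.subtype.mapMatrix P) (S.subtype.mapMatrix C) ∈ S.matrix := by
  have hunit : IsUnit (1 - P * C).det :=
    isUnit_det_of_isLocalHom φ (by rwa [map_sub, map_one, map_mul])
  have hmap : 1 - S.subtype.mapMatrix P * S.subtype.mapMatrix C =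
      S.subtype.mapMatrix (1 - P * C) := by rw [map_sub, map_one, map_mul]
  refine ⟨?_, closedLoop_mem_matrix (fun i j => (P i j).2) (fun i j => (C i j).2) ?_⟩
  · rw [hmap, ← RingHom.map_det]
    exact (hunit.map S.subtype).ne_zero
  · rw [hmap]
    exact nonsing_inv_mem_matrix hunit

/-- Unlike `1 - P * C`, the matrix `P - C⁻¹` gives formulas that never multiply by `P`, which may
have a pole where `C⁻¹` and `(P - C⁻¹)⁻¹` are regular. -/
lemma closedLoop_eq_fromBlocks {P C : Matrix m m R} (hC : IsUnit C.det)
    (hX : IsUnit (P - C⁻¹).det) :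
    closedLoop P C = fromBlocks (-(C⁻¹ * (P - C⁻¹)⁻¹)) (-(C⁻¹ + C⁻¹ * (P - C⁻¹)⁻¹ * C⁻¹))
      (-(P - C⁻¹)⁻¹) (-(1 + (P - C⁻¹)⁻¹ * C⁻¹)) := by
  have hinv : (1 - P * C)⁻¹ = -(C⁻¹ * (P - C⁻¹)⁻¹) := by
    refine inv_eq_left_inv ?_
    calc -(C⁻¹ * (P - C⁻¹)⁻¹) * (1 - P * C)
        = C⁻¹ * ((P - C⁻¹)⁻¹ * ((P - C⁻¹) * C)) := by
          rw [sub_mul, nonsing_inv_mul _ hC, ← neg_sub (P * C) 1, neg_mul_neg, mul_assoc]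
      _ = 1 := by rw [nonsing_inv_mul_cancel_left _ _ hX, nonsing_inv_mul _ hC]
  have hP : (P - C⁻¹)⁻¹ * P = 1 + (P - C⁻¹)⁻¹ * C⁻¹ := by
    rw [← sub_eq_iff_eq_add, ← mul_sub, nonsing_inv_mul _ hX]
  rw [closedLoop, hinv, mul_neg, mul_nonsing_inv_cancel_left _ _ hC, neg_mul, neg_mul, mul_assoc,
    hP, mul_add, mul_one, mul_assoc]

lemma closedLoop_mem_matrix_of_inv_mem {S : Subring R} {P C : Matrix m m R} (hC : IsUnit C.det)
    (hX : IsUnit (P - C⁻¹).det) (hCS : C⁻¹ ∈ S.matrix) (hXS : (P - C⁻¹)⁻¹ ∈ S.matrix) :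
    closedLoop P C ∈ S.matrix := by
  rw [closedLoop_eq_fromBlocks hC hX]
  have hCX := mul_mem hCS hXS
  exact fromBlocks_mem_matrix (neg_mem hCX) (neg_mem (add_mem hCS (mul_mem hCX hCS))) (neg_mem hXS)
    (neg_mem (add_mem (one_mem _) (mul_mem hXS hCS)))

end ClosedLoop

/-! ### Evaluation of transfer matrices -/

section TransferMatrix

variable {G H P C : Matrix (Fin n) (Fin n) (RatFunc ℝ)} {s : ℂ}

lemma not_hasPole_iff_mem : ¬ HasPole G s ↔ G ∈ (regularSubring s).matrix := by
  simp only [HasPole, not_exists]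
  rfl

lemma evalM_sub (hG : ¬ HasPole G s) (hH : ¬ HasPole H s) :
    evalM (G - H) s = evalM G s - evalM H s := by
  obtain ⟨G, rfl⟩ := exists_mapMatrix_subtype_eq (not_hasPole_iff_mem.1 hG)
  obtain ⟨H, rfl⟩ := exists_mapMatrix_subtype_eq (not_hasPole_iff_mem.1 hH)
  rw [← map_sub]
  exact map_sub (evalHom s).mapMatrix G H

lemma isUnit_det_of_det_evalM_ne_zero (hG : ¬ HasPole G s) (hdet : (evalM G s).det ≠ 0) :
    IsUnit G.det := by
  obtain ⟨G, rfl⟩ := exists_mapMatrix_subtype_eq (not_hasPole_iff_mem.1 hG)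
  rw [← RingHom.map_det]
  exact (isUnit_det_of_isLocalHom (evalHom s) hdet).map _

lemma not_hasPole_inv (hG : ¬ HasPole G s) (hdet : (evalM G s).det ≠ 0) : ¬ HasPole G⁻¹ s := by
  obtain ⟨G, rfl⟩ := exists_mapMatrix_subtype_eq (not_hasPole_iff_mem.1 hG)
  exact not_hasPole_iff_mem.2 (nonsing_inv_mem_matrix (isUnit_det_of_isLocalHom (evalHom s) hdet))

lemma evalM_inv (hG : ¬ HasPole G s) (hdet : (evalM G s).det ≠ 0) :
    evalM G⁻¹ s = (evalM G s)⁻¹ := by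
  obtain ⟨G, rfl⟩ := exists_mapMatrix_subtype_eq (not_hasPole_iff_mem.1 hG)
  have hunit := isUnit_det_of_isLocalHom (evalHom s) hdet
  rw [← mapMatrix_nonsing_inv _ hunit]
  exact mapMatrix_nonsing_inv (evalHom s) hunit

lemma not_hasPole_sub (hG : ¬ HasPole G s) (hH : ¬ HasPole H s) : ¬ HasPole (G - H) s :=
  not_hasPole_iff_mem.2 (sub_mem (not_hasPole_iff_mem.1 hG) (not_hasPole_iff_mem.1 hH))

lemma eventually_cofinite_not_hasPole (G : Matrix (Fin n) (Fin n) (RatFunc ℝ)) :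
    ∀ᶠ s in cofinite, ¬ HasPole G s := by
  simp only [HasPole, not_exists, eventually_all]
  exact fun i j => eventually_cofinite_not_isPoleAt (G i j)

lemma differentiableAt_evalM_apply (hG : ¬ HasPole G s) (i j : Fin n) :
    DifferentiableAt ℂ (fun z => evalM G z i j) s :=
  differentiableAt_evalC fun h => hG ⟨i, j, h⟩

lemma continuousAt_evalM (hG : ¬ HasPole G s) : ContinuousAt (evalM G) s :=
  tendsto_pi_nhds.2 fun i => tendsto_pi_nhds.2 fun j =>
    (differentiableAt_evalM_apply hG i j).continuousAt

lemma tendsto_evalM_cobounded (hG : Proper G) :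
    Tendsto (evalM G) (Bornology.cobounded ℂ) (𝓝 ((evalInf G).map Complex.ofReal)) :=
  tendsto_pi_nhds.2 fun i => tendsto_pi_nhds.2 fun j => tendsto_evalC_cobounded (hG i j)

lemma evalM_ofReal (G : Matrix (Fin n) (Fin n) (RatFunc ℝ)) (x : ℝ) :
    evalM G x = (evalR G x).map Complex.ofReal :=
  Matrix.ext fun i j => evalC_ofReal (G i j) x

lemma evalM_conj (G : Matrix (Fin n) (Fin n) (RatFunc ℝ)) (s : ℂ) :
    evalM G (starRingEnd ℂ s) = (evalM G s).map (starRingEnd ℂ) :=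
  Matrix.ext fun i j => evalC_conj (G i j) s

lemma not_isPoleAt_closedLoop (hP : ¬ HasPole P s) (hC : ¬ HasPole C s)
    (hdet : (1 - evalM P s * evalM C s).det ≠ 0) (i j : Fin n ⊕ Fin n) :
    ¬ IsPoleAt (closedLoop P C i j) s := by
  obtain ⟨P, rfl⟩ := exists_mapMatrix_subtype_eq (not_hasPole_iff_mem.1 hP)
  obtain ⟨C, rfl⟩ := exists_mapMatrix_subtype_eq (not_hasPole_iff_mem.1 hC)
  exact (closedLoop_mem_matrix_of_isLocalHom (evalHom s) hdet).2 i j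

lemma det_ne_zero_and_closedLoop_mem_properSubring (hP : Proper P) (hC : Proper C)
    (hdet : (1 - evalInf P * evalInf C).det ≠ 0) :
    (1 - P * C).det ≠ 0 ∧ closedLoop P C ∈ properSubring.matrix := by
  obtain ⟨P, rfl⟩ := exists_mapMatrix_subtype_eq (S := properSubring)
    fun i j => mem_properSubring.2 (hP i j)
  obtain ⟨C, rfl⟩ := exists_mapMatrix_subtype_eq (S := properSubring)
    fun i j => mem_properSubring.2 (hC i j)
  exact closedLoop_mem_matrix_of_isLocalHom atInfinityHom hdet

end TransferMatrix

/-! ### Zero-free homotopies of holomorphic functions -/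

section Homotopy

variable {T : Type*} [TopologicalSpace T] {U V K : Set ℂ} {F : T → ℂ → ℂ}

lemma le_norm_of_forall_mem_frontier_le_norm {f : ℂ → ℂ} {r : ℝ} {z : ℂ}
    (hV : Bornology.IsBounded V) (hf : DiffContOnCl ℂ f V) (hf0 : ∀ z ∈ closure V, f z ≠ 0)
    (hr : 0 < r) (hfr : ∀ z ∈ frontier V, r ≤ ‖f z‖) (hz : z ∈ closure V) : r ≤ ‖f z‖ := by
  have hinv : ‖f⁻¹ z‖ ≤ r⁻¹ := by
    refine Complex.norm_le_of_forall_mem_frontier_norm_le hV (hf.inv hf0) (fun w hw => ?_) hz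
    rw [Pi.inv_apply, norm_inv]
    exact inv_anti₀ hr (hfr w hw)
  rw [Pi.inv_apply, norm_inv] at hinv
  exact (inv_le_inv₀ (norm_pos_iff.2 (hf0 z hz)) hr).1 hinv

lemma eventually_forall_mem_isCompact {X Y : Type*} [TopologicalSpace X] [TopologicalSpace Y]
    {F : T → X → Y} {U K : Set X} {W : Set Y} (hU : IsOpen U) (hK : IsCompact K) (hKU : K ⊆ U)
    (hF : ContinuousOn F.uncurry (Set.univ ×ˢ U)) (hW : IsOpen W) {t : T}
    (ht : ∀ x ∈ K, F t x ∈ W) : ∀ᶠ t' in 𝓝 t, ∀ x ∈ K, F t' x ∈ W := by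
  refine hK.eventually_forall_of_forall_eventually fun x hx => ?_
  have hcont : ContinuousAt F.uncurry (t, x) :=
    hF.continuousAt ((isOpen_univ.prod hU).mem_nhds ⟨trivial, hKU hx⟩)
  exact hcont.eventually_mem (hW.mem_nhds (ht x hx))

lemma eventually_exists_zero (hU : IsOpen U) (hK : IsCompact K) (hKU : K ⊆ U)
    (hF : ContinuousOn F.uncurry (Set.univ ×ˢ U)) (hd : ∀ t, DifferentiableOn ℂ (F t) U)
    (hne : ∀ t, ∀ s ∈ U \ K, F t s ≠ 0) {t : T} (ht : ∃ s ∈ U, F t s = 0) :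
    ∀ᶠ t' in 𝓝 t, ∃ s ∈ U, F t' s = 0 := by
  obtain ⟨s₀, hs₀U, hs₀⟩ := ht
  obtain ⟨V, hV, hKV, hVU, hVc⟩ := exists_open_between_and_isCompact_closure hK hU hKU
  have hs₀V : s₀ ∈ V := hKV (of_not_not fun h => hne t s₀ ⟨hs₀U, h⟩ hs₀)
  have hfrU : frontier V ⊆ U := frontier_subset_closure.trans hVU
  have hfrc : IsCompact (frontier V) := hVc.of_isClosed_subset isClosed_frontier
    frontier_subset_closure
  have hfr0 (s) (hs : s ∈ frontier V) : 0 < ‖F t s‖ :=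
    norm_pos_iff.2 (hne t s ⟨hfrU hs, fun h => (hV.frontier_eq ▸ hs).2 (hKV h)⟩)
  obtain ⟨r, hr, hrF⟩ :=
    hfrc.exists_forall_le' ((hd t).continuousOn.mono hfrU).norm hfr0
  have hfrontier := eventually_forall_mem_isCompact hU hfrc hfrU hF
    (isOpen_lt continuous_const continuous_norm) (W := {w | r / 2 < ‖w‖})
    fun s hs => (half_lt_self hr).trans_le (hrF s hs)
  have hcenter := eventually_forall_mem_isCompact hU isCompact_singleton
    (Set.singleton_subset_iff.2 hs₀U) hF (isOpen_lt continuous_norm continuous_const)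
    (W := {w | ‖w‖ < r / 2}) (t := t) (by simpa [hs₀] using hr)
  filter_upwards [hfrontier, hcenter] with t' hfr hs
  by_contra! hzero
  exact (hs s₀ rfl).not_ge <| le_norm_of_forall_mem_frontier_le_norm
    (hVc.isBounded.subset subset_closure) ((hd t').mono hVU).diffContOnCl
    (fun z hz => hzero z (hVU hz)) (half_pos hr) (fun z hz => (hfr z hz).le) (subset_closure hs₀V)

theorem forall_ne_zero_of_preconnectedSpace [PreconnectedSpace T] (hU : IsOpen U)
    (hK : IsCompact K) (hKU : K ⊆ U) (hF : ContinuousOn F.uncurry (Set.univ ×ˢ U))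
    (hd : ∀ t, DifferentiableOn ℂ (F t) U) (hne : ∀ t, ∀ s ∈ U \ K, F t s ≠ 0) {t₀ : T}
    (h₀ : ∀ s ∈ U, F t₀ s ≠ 0) (t : T) : ∀ s ∈ U, F t s ≠ 0 := by
  have hopen : IsOpen {t | ∃ s ∈ U, F t s = 0} :=
    isOpen_iff_eventually.2 fun t ht => eventually_exists_zero hU hK hKU hF hd hne ht
  have hopen_compl : IsOpen {t | ∃ s ∈ U, F t s = 0}ᶜ := by
    refine isOpen_iff_eventually.2 fun t ht => ?_
    have ht' : ∀ s ∈ K, F t s ∈ ({0}ᶜ : Set ℂ) := fun s hs h => ht ⟨s, hKU hs, h⟩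
    filter_upwards [eventually_forall_mem_isCompact hU hK hKU hF isOpen_compl_singleton ht']
      with t' ht' ⟨s, hsU, hs⟩
    by_cases hsK : s ∈ K
    exacts [ht' s hsK hs, hne t' s ⟨hsU, hsK⟩ hs]
  rcases isClopen_iff.1 ⟨⟨hopen_compl⟩, hopen⟩ with hempty | huniv
  · exact fun s hsU hs => Set.eq_empty_iff_forall_notMem.1 hempty t ⟨s, hsU, hs⟩
  · obtain ⟨s, hsU, hs⟩ := Set.eq_univ_iff_forall.1 huniv t₀
    exact absurd hs (h₀ s hsU)

theorem forall_ne_zero_of_forall_mem_frontier [PreconnectedSpace T] (hU : IsOpen U)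
    (hF : ContinuousOn F.uncurry (Set.univ ×ˢ U)) (hd : ∀ t, DifferentiableOn ℂ (F t) U)
    (hinf : ∀ᶠ s in Bornology.cobounded ℂ, ∀ t, F t s ≠ 0)
    (hfr : ∀ s ∈ frontier U, ∀ᶠ z in 𝓝[U] s, ∀ t, F t z ≠ 0) {t₀ : T}
    (h₀ : ∀ s ∈ U, F t₀ s ≠ 0) (t : T) : ∀ s ∈ U, F t s ≠ 0 := by
  let Z : Set ℂ := {s ∈ U | ∃ t, F t s = 0}
  have hbdd : Bornology.IsBounded Z :=
    Bornology.isBounded_def.2 (mem_of_superset hinf fun s hne ⟨_, t, hs⟩ => hne t hs)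
  have hZU : closure Z ⊆ U := by
    intro s hs
    by_contra hsU
    have hsfr : s ∈ frontier U := hU.frontier_eq ▸ ⟨closure_mono (Set.sep_subset _ _) hs, hsU⟩
    have hfreq : ∃ᶠ z in 𝓝 s, z ∈ Z := mem_closure_iff_frequently.1 hs
    refine hfreq ((eventually_nhdsWithin_iff.1 (hfr s hsfr)).mono ?_)
    exact fun z hz ⟨hzU, t, hzt⟩ => hz hzU t hzt
  exact forall_ne_zero_of_preconnectedSpace hU (hbdd.isCompact_closure) hZU hF hd
    (fun t s hs hzero => hs.2 (subset_closure ⟨hs.1, t, hzero⟩)) h₀ t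

end Homotopy

/-! ### Lower bounds in the Loewner order -/

section StarOrder

variable {A X : Type*} [CStarAlgebra A] [PartialOrder A] [StarOrderedRing A]

lemma exists_pos_algebraMap_le_of_isStrictlyPositive {a : A} (ha : IsStrictlyPositive a) :
    ∃ r > 0, algebraMap ℝ A r ≤ a := by
  cases subsingleton_or_nontrivial A with
  | inl _ => exact ⟨1, one_pos, (Subsingleton.elim _ _).le⟩
  | inr _ => exact (CFC.exists_pos_algebraMap_le_iff ha.isSelfAdjoint).2 fun x hx =>
      ha.spectrum_pos hx

lemma eventually_algebraMap_le {l : Filter X} {f : X → A} {a : A} {c c' : ℝ}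
    (hf : Tendsto f l (𝓝 a)) (hsa : ∀ x, IsSelfAdjoint (f x)) (ha : IsSelfAdjoint a)
    (hca : algebraMap ℝ A c ≤ a) (hc : c' < c) : ∀ᶠ x in l, algebraMap ℝ A c' ≤ f x := by
  filter_upwards [(tendsto_iff_norm_sub_tendsto_zero.1 hf).eventually_le_const
    (sub_pos.2 hc)] with x hx
  have hdist : -algebraMap ℝ A (c - c') ≤ f x - a :=
    (neg_le_neg (algebraMap_mono A hx)).trans
      ((hsa x).sub ha).neg_algebraMap_norm_le_self
  calc algebraMap ℝ A c' = algebraMap ℝ A c + -algebraMap ℝ A (c - c') := by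
        rw [map_sub]; abel
    _ ≤ a + (f x - a) := add_le_add hca hdist
    _ = f x := add_sub_cancel a (f x)

end StarOrder

section NIKernel

open scoped MatrixOrder Matrix.Norms.L2Operator

variable {M : Matrix (Fin n) (Fin n) ℂ}

lemma isSelfAdjoint_niKer (M : Matrix (Fin n) (Fin n) ℂ) : IsSelfAdjoint (niKer M) := by
  simp [IsSelfAdjoint, niKer, star_eq_conjTranspose, smul_sub, ← sub_eq_neg_add]

lemma continuous_niKer : Continuous (niKer : Matrix (Fin n) (Fin n) ℂ → _) := by
  unfold niKer
  fun_prop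

lemma niKer_add (M N : Matrix (Fin n) (Fin n) ℂ) : niKer (M + N) = niKer M + niKer N := by
  rw [niKer, niKer, niKer, ← smul_add, conjTranspose_add, add_sub_add_comm]

lemma niKer_real_smul (c : ℝ) (M : Matrix (Fin n) (Fin n) ℂ) : niKer (c • M) = c • niKer M := by
  rw [niKer, niKer, conjTranspose_smul, star_trivial, ← smul_sub, smul_comm]

lemma niKer_smul_neg_I_smul (hM : M.IsHermitian) (α : ℂ) :
    niKer (α • -Complex.I • M) = (2 * α.re) • M := by
  have hα : α + starRingEnd ℂ α = ((2 * α.re : ℝ) : ℂ) := Complex.add_conj α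
  rw [niKer, conjTranspose_smul, conjTranspose_smul, hM.eq, smul_smul, smul_smul, ← sub_smul,
    smul_smul, star_neg, Complex.star_def, Complex.conj_I, neg_neg, ← Complex.coe_smul, ← hα]
  congr 1
  linear_combination -(α + starRingEnd ℂ α) * Complex.I_mul_I

lemma niKer_neg_inv (hM : IsUnit M.det) : niKer (-M⁻¹) = star M⁻¹ * niKer M * M⁻¹ := by
  have hstar : star M⁻¹ * Mᴴ = 1 := by
    rw [← star_eq_conjTranspose, ← star_mul, mul_nonsing_inv _ hM, star_one]
  rw [niKer, niKer, mul_smul_comm, smul_mul_assoc, mul_sub, sub_mul, hstar, one_mul, mul_assoc,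
    mul_nonsing_inv _ hM, mul_one, ← star_eq_conjTranspose, star_neg, sub_neg_eq_add,
    neg_add_eq_sub]

lemma norm_niKer_le (M : Matrix (Fin n) (Fin n) ℂ) : ‖niKer M‖ ≤ 2 * ‖M‖ := by
  calc ‖niKer M‖ = ‖M - Mᴴ‖ := by rw [niKer, norm_smul, Complex.norm_I, one_mul]
    _ ≤ ‖M‖ + ‖Mᴴ‖ := norm_sub_le _ _
    _ = 2 * ‖M‖ := by rw [l2_opNorm_conjTranspose, two_mul]

lemma isUnit_det_of_posDef_niKer (hM : (niKer M).PosDef) : IsUnit M.det := by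
  rw [isUnit_iff_ne_zero]
  intro hdet
  obtain ⟨v, hv, hMv⟩ := exists_mulVec_eq_zero_iff.2 hdet
  refine (hM.dotProduct_mulVec_pos hv).ne' ?_
  rw [niKer, smul_mulVec, sub_mulVec, hMv, zero_sub, dotProduct_smul, dotProduct_neg,
    dotProduct_mulVec, ← star_mulVec, hMv, star_zero, zero_dotProduct, neg_zero, smul_zero]

lemma posDef_niKer_neg_inv (hM : (niKer M).PosDef) : (niKer (-M⁻¹)).PosDef := by
  have hdet := isUnit_det_of_posDef_niKer hM
  rw [niKer_neg_inv hdet]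
  exact (IsUnit.posDef_star_left_conjugate_iff
    (isUnit_nonsing_inv_iff.2 ((isUnit_iff_isUnit_det M).2 hdet))).2 hM

lemma isUnit_det_of_algebraMap_le_niKer {δ : ℝ} (hδ : 0 < δ)
    (hM : algebraMap ℝ _ δ ≤ niKer M) : IsUnit M.det :=
  isUnit_det_of_posDef_niKer ((isStrictlyPositive_algebraMap hδ).of_le hM).posDef

lemma norm_inv_le_of_algebraMap_le_niKer {δ : ℝ} (hδ : 0 < δ)
    (hM : algebraMap ℝ _ δ ≤ niKer M) : ‖M⁻¹‖ ≤ 2 / δ := by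
  have hcongr : δ • (star M⁻¹ * M⁻¹) ≤ niKer (-M⁻¹) := by
    rw [niKer_neg_inv (isUnit_det_of_algebraMap_le_niKer hδ hM)]
    simpa [Algebra.algebraMap_eq_smul_one] using star_left_conjugate_le_conjugate hM M⁻¹
  have hsq : δ * ‖M⁻¹‖ ^ 2 ≤ 2 * ‖M⁻¹‖ := by
    calc δ * ‖M⁻¹‖ ^ 2 = ‖δ • (star M⁻¹ * M⁻¹)‖ := by
          rw [norm_smul, CStarRing.norm_star_mul_self, Real.norm_of_nonneg hδ.le, sq]
      _ ≤ ‖niKer (-M⁻¹)‖ := CStarAlgebra.norm_le_norm_of_nonneg_of_le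
          (smul_nonneg hδ.le (star_mul_self_nonneg _)) hcongr
      _ ≤ 2 * ‖M⁻¹‖ := by simpa using norm_niKer_le (-M⁻¹)
  rw [le_div_iff₀ hδ]
  nlinarith [norm_nonneg M⁻¹]

lemma norm_apply_le_l2_opNorm (M : Matrix (Fin n) (Fin n) ℂ) (i j : Fin n) :
    ‖M i j‖ ≤ ‖M‖ := by
  have hcol := M.l2_opNorm_mulVec (EuclideanSpace.single j 1)
  simp only [PiLp.ofLp_single, mulVec_single, MulOpposite.op_one, one_smul,
    PiLp.continuousLinearEquiv_symm_apply, PiLp.norm_single, norm_one, mul_one] at hcol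
  exact (PiLp.norm_apply_le _ i).trans hcol

end NIKernel

/-! ### Behaviour next to the imaginary axis -/

lemma exists_tendsto_sub_inv_smul {E : Type*} [NormedAddCommGroup E] [NormedSpace ℂ E]
    [CompleteSpace E] {f : ℂ → E} {a : ℂ} {r : E}
    (hd : ∀ᶠ z in 𝓝[≠] a, DifferentiableAt ℂ f z)
    (hr : Tendsto (fun z => (z - a) • f z) (𝓝[≠] a) (𝓝 r)) :
    ∃ b, Tendsto (fun z => f z - (z - a)⁻¹ • r) (𝓝[≠] a) (𝓝 b) := by
  classical
  let g : ℂ → E := Function.update (fun z => (z - a) • f z) a r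
  have hgd : ∀ᶠ z in 𝓝[≠] a, DifferentiableAt ℂ g z := by
    filter_upwards [hd, self_mem_nhdsWithin] with z hz hza
    refine ((differentiableAt_id.sub_const a).smul hz).congr_of_eventuallyEq ?_
    filter_upwards [isOpen_ne.mem_nhds hza] with w hw using Function.update_of_ne hw _ _
  have hg : AnalyticAt ℂ g a :=
    Complex.analyticAt_of_differentiable_on_punctured_nhds_of_continuousAt hgd
      (continuousAt_update_same.2 hr)
  refine ⟨deriv g a, (hasDerivAt_iff_tendsto_slope.1 hg.differentiableAt.hasDerivAt).congr' ?_⟩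
  filter_upwards [self_mem_nhdsWithin] with z hz
  have hgz : g z = (z - a) • f z := Function.update_of_ne hz _ _
  have hga : g a = r := Function.update_self ..
  rw [slope_def_module, hgz, hga, smul_sub, inv_smul_smul₀ (sub_ne_zero.2 hz)]

/-- The open right half of the complex plane. -/
def rightHalfPlane : Set ℂ := {s | 0 < s.re}

lemma isOpen_rightHalfPlane : IsOpen rightHalfPlane :=
  isOpen_lt continuous_const Complex.continuous_re

lemma closure_rightHalfPlane : closure rightHalfPlane = {s | 0 ≤ s.re} :=
  Complex.closure_setOfPred_lt_re 0

lemma frontier_rightHalfPlane : frontier rightHalfPlane = {s | s.re = 0} :=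
  Complex.frontier_setOfPred_lt_re 0

lemma nhdsWithin_rightHalfPlane_le {s : ℂ} (hs : s.re = 0) : 𝓝[rightHalfPlane] s ≤ 𝓝[≠] s :=
  nhdsWithin_mono s fun z (hz : 0 < z.re) h => hz.ne' (h ▸ hs)

lemma nhdsWithin_rightHalfPlane_neBot {s : ℂ} (hs : s.re = 0) : (𝓝[rightHalfPlane] s).NeBot :=
  mem_closure_iff_nhdsWithin_neBot.1 (closure_rightHalfPlane ▸ hs.ge)

@[simp] lemma jw_re (ω : ℝ) : (jw ω).re = 0 := by simp [jw]

lemma tendsto_jw (ω : ℝ) : Tendsto jw (𝓝[≠] ω) (𝓝[≠] jw ω) := by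
  have hcont : Continuous jw := by unfold jw; fun_prop
  have hinj : Function.Injective jw := fun x y h => by simpa [jw] using h
  exact hcont.continuousAt.tendsto.inf (by simp [hinj.eq_iff])

section HomotopyRegular

variable {m k k' : Type*} [Fintype m] [DecidableEq m] [CommRing k] [Algebra ℝ k] [CommRing k']
  [Algebra ℝ k']

/-- A loop gain `M` is homotopy regular if `1 - τ M` stays nonsingular while `M` is scaled down
to `0`. The determinant is only asked to be nonzero, so the notion is meant for matrices over a
field. -/
def HomotopyRegular (M : Matrix m m k) : Prop :=
  ∀ τ ∈ Set.Icc (0 : ℝ) 1, (1 - τ • M).det ≠ 0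

lemma HomotopyRegular.det_one_sub_ne_zero {M : Matrix m m k} (hM : HomotopyRegular M) :
    (1 - M).det ≠ 0 := by
  simpa using hM 1 (Set.right_mem_Icc.2 zero_le_one)

lemma HomotopyRegular.map {M : Matrix m m k} (hM : HomotopyRegular M) {φ : k →ₐ[ℝ] k'}
    (hφ : Function.Injective φ) : HomotopyRegular (M.map φ) := by
  intro τ hτ
  have hmap : 1 - τ • M.map φ = φ.mapMatrix (1 - τ • M) := by
    rw [map_sub, map_one, map_smul, AlgHom.mapMatrix_apply]
  rw [hmap, ← AlgHom.map_det]
  exact (map_ne_zero_iff φ hφ).2 (hM τ hτ)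

lemma homotopyRegular_of_forall_mem_spectrum_lt_one {M : Matrix m m ℝ}
    (hM : ∀ μ ∈ spectrum ℝ M, μ < 1) : HomotopyRegular M := by
  intro τ hτ hdet
  have hτ0 : τ ≠ 0 := by
    rintro rfl
    simp at hdet
  have hfactor : algebraMap ℝ (Matrix m m ℝ) τ⁻¹ - M = τ⁻¹ • (1 - τ • M) := by
    rw [Algebra.algebraMap_eq_smul_one, smul_sub, smul_smul, inv_mul_cancel₀ hτ0, one_smul]
  have hmem : τ⁻¹ ∈ spectrum ℝ M := by
    rw [spectrum.mem_iff, isUnit_iff_isUnit_det, hfactor, det_smul, hdet, mul_zero]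
    exact not_isUnit_zero
  exact (hM _ hmem).not_ge ((one_le_inv₀ (hτ.1.lt_of_ne' hτ0)).2 hτ.2)

lemma HomotopyRegular.eventually_of_tendsto {X : Type*} {l : Filter X} {f : X → Matrix m m ℂ}
    {M : Matrix m m ℂ} (hM : HomotopyRegular M) (hf : Tendsto f l (𝓝 M)) :
    ∀ᶠ x in l, HomotopyRegular (f x) := by
  have hcont : Continuous fun q : Matrix m m ℂ × ℝ => (1 - q.2 • q.1).det :=
    Continuous.matrix_det (by fun_prop)
  exact hf.eventually <| isCompact_Icc.eventually_forall_of_forall_eventually fun τ hτ =>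
    hcont.continuousAt.eventually_ne (hM τ hτ)

end HomotopyRegular

section ImaginaryAxis

open scoped MatrixOrder Matrix.Norms.L2Operator

variable {P C G : Matrix (Fin n) (Fin n) (RatFunc ℝ)} {ω : ℝ}

lemma differentiableAt_evalM {s : ℂ} (hG : ¬ HasPole G s) : DifferentiableAt ℂ (evalM G) s :=
  differentiableAt_pi.2 fun i => differentiableAt_pi.2 fun j => differentiableAt_evalM_apply hG i j

lemma exists_posSemidef_residue (hP : IsNI P) (hω : 0 < ω) :
    ∃ R : Matrix (Fin n) (Fin n) ℂ, R.PosSemidef ∧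
      Tendsto (fun s => (s - jw ω) • Complex.I • evalM P s) (𝓝[≠] jw ω) (𝓝 R) := by
  by_cases hpole : HasPole P (jw ω)
  · exact hP.2.2.2.1 ω hω hpole
  · have hlim : Tendsto (fun s => (s - jw ω) • Complex.I • evalM P s) (𝓝 (jw ω))
        (𝓝 ((jw ω - jw ω) • Complex.I • evalM P (jw ω))) :=
      (tendsto_id.sub_const _).smul ((continuousAt_evalM hpole).tendsto.const_smul _)
    rw [sub_self, zero_smul] at hlim
    exact ⟨0, PosSemidef.zero, hlim.mono_left nhdsWithin_le_nhds⟩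

lemma exists_residue_regularPart (hP : IsNI P) (hω : 0 < ω) :
    ∃ R L : Matrix (Fin n) (Fin n) ℂ, R.PosSemidef ∧
      Tendsto (fun s => evalM P s - (s - jw ω)⁻¹ • -Complex.I • R) (𝓝[≠] jw ω) (𝓝 L) := by
  obtain ⟨R, hR, hlim⟩ := exists_posSemidef_residue hP hω
  have hlim' : Tendsto (fun s => (s - jw ω) • evalM P s) (𝓝[≠] jw ω) (𝓝 (-Complex.I • R)) := by
    refine (hlim.const_smul (-Complex.I)).congr fun s => ?_
    rw [smul_comm (-Complex.I), smul_smul (-Complex.I), neg_mul, Complex.I_mul_I, neg_neg, one_smul]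
  have hd : ∀ᶠ s in 𝓝[≠] jw ω, DifferentiableAt ℂ (evalM P) s := by
    filter_upwards [nhdsNE_le_cofinite _ (eventually_cofinite_not_hasPole P)] with s hs
      using differentiableAt_evalM hs
  obtain ⟨L, hL⟩ := exists_tendsto_sub_inv_smul hd hlim'
  exact ⟨R, L, hR, hL⟩

lemma niKer_evalM_eq {R : Matrix (Fin n) (Fin n) ℂ} (hR : R.IsHermitian) (a s : ℂ) :
    niKer (evalM P s) = (2 * (s - a)⁻¹.re) • R +
      niKer (evalM P s - (s - a)⁻¹ • -Complex.I • R) := by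
  rw [← niKer_smul_neg_I_smul hR, ← niKer_add, add_sub_cancel]

lemma niKer_regularPart_nonneg (hP : IsNI P) (hω : 0 < ω) {R L : Matrix (Fin n) (Fin n) ℂ}
    (hR : R.IsHermitian)
    (hL : Tendsto (fun s => evalM P s - (s - jw ω)⁻¹ • -Complex.I • R) (𝓝[≠] jw ω) (𝓝 L)) :
    0 ≤ niKer L := by
  refine ge_of_tendsto (((continuous_niKer.tendsto L).comp hL).comp (tendsto_jw ω)) ?_
  have hreg := (tendsto_jw ω).eventually
    (nhdsNE_le_cofinite _ (eventually_cofinite_not_hasPole P))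
  filter_upwards [hreg, nhdsWithin_le_nhds (lt_mem_nhds hω)] with x hx hx0
  have hker := niKer_evalM_eq (P := P) hR (jw ω) (jw x)
  rw [Complex.inv_re, Complex.sub_re, jw_re, jw_re, sub_self, zero_div, mul_zero, zero_smul,
    zero_add] at hker
  have hnonneg := (hP.2.2.1 x hx0 hx).nonneg
  rwa [hker] at hnonneg

/-- The singular part of `P` only helps: its kernel is `2 Re (s - jω)⁻¹` times the residue of
`j P`. -/
lemma eventually_neg_le_niKer (hP : IsNI P) (hω : 0 < ω) {η : ℝ} (hη : 0 < η) :
    ∀ᶠ s in 𝓝[rightHalfPlane] jw ω, algebraMap ℝ _ (-η) ≤ niKer (evalM P s) := by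
  obtain ⟨R, L, hR, hL⟩ := exists_residue_regularPart hP hω
  have hreg := eventually_algebraMap_le ((continuous_niKer.tendsto L).comp hL)
    (fun _ => isSelfAdjoint_niKer _) (isSelfAdjoint_niKer L) (c := 0) (c' := -η)
    (by simpa using niKer_regularPart_nonneg hP hω hR.1 hL) (neg_neg_iff_pos.2 hη)
  filter_upwards [nhdsWithin_rightHalfPlane_le (jw_re ω) hreg, self_mem_nhdsWithin] with s hs hs0
  rw [niKer_evalM_eq hR.1 (jw ω) s]
  have hre : 0 ≤ (s - jw ω)⁻¹.re := by
    rw [Complex.inv_re, Complex.sub_re, jw_re, sub_zero]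
    exact div_nonneg (le_of_lt hs0) (Complex.normSq_nonneg _)
  exact hs.trans (le_add_of_nonneg_left (smul_nonneg (by positivity) hR.nonneg))

lemma continuousAt_nonsing_inv {M : Matrix (Fin n) (Fin n) ℂ} (hM : M.det ≠ 0) :
    ContinuousAt (fun N : Matrix (Fin n) (Fin n) ℂ => N⁻¹) M :=
  continuousAt_matrix_inv M (Ring.inverse_eq_inv' (G₀ := ℂ) ▸ continuousAt_inv₀ hM)

lemma IsNI.not_hasPole (hP : IsNI P) {s : ℂ} (hs : s ∈ rightHalfPlane) : ¬ HasPole P s :=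
  hP.2.1 s hs

lemma IsSNI.not_hasPole (hC : IsSNI C) {s : ℂ} (hs : 0 ≤ s.re) : ¬ HasPole C s :=
  fun ⟨i, j, h⟩ => hC.1.2 s hs i j h

lemma IsSNI.det_evalM_ne_zero (hC : IsSNI C) (hω : 0 < ω) : (evalM C (jw ω)).det ≠ 0 :=
  (isUnit_det_of_posDef_niKer (hC.2 ω hω)).ne_zero

lemma IsSNI.eventually_det_evalM_ne_zero (hC : IsSNI C) (hω : 0 < ω) :
    ∀ᶠ s in 𝓝[rightHalfPlane] jw ω, (evalM C s).det ≠ 0 :=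
  nhdsWithin_le_nhds <| (continuous_id.matrix_det.continuousAt.comp
    (continuousAt_evalM (hC.not_hasPole (jw_re ω).ge))).eventually_ne (hC.det_evalM_ne_zero hω)

lemma IsSNI.exists_pos_eventually_algebraMap_le_niKer_neg_inv (hC : IsSNI C) (hω : 0 < ω) :
    ∃ δ > 0, ∀ᶠ s in 𝓝 (jw ω), algebraMap ℝ _ δ ≤ niKer (-(evalM C s)⁻¹) := by
  obtain ⟨δ, hδ, hle⟩ := exists_pos_algebraMap_le_of_isStrictlyPositive
    (posDef_niKer_neg_inv (hC.2 ω hω)).isStrictlyPositive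
  have hinv : Tendsto (fun s => (evalM C s)⁻¹) (𝓝 (jw ω)) (𝓝 (evalM C (jw ω))⁻¹) :=
    (continuousAt_nonsing_inv (hC.det_evalM_ne_zero hω)).comp
      (continuousAt_evalM (hC.not_hasPole (jw_re ω).ge))
  exact ⟨δ / 2, half_pos hδ, eventually_algebraMap_le
    ((continuous_niKer.tendsto _).comp hinv.neg) (fun _ => isSelfAdjoint_niKer _)
    (isSelfAdjoint_niKer _) hle (half_lt_self hδ)⟩

lemma exists_pos_eventually_algebraMap_le_niKer_sub_inv (hP : IsNI P) (hC : IsSNI C)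
    (hω : 0 < ω) :
    ∃ δ > 0, ∀ᶠ s in 𝓝[rightHalfPlane] jw ω, ∀ τ ∈ Set.Icc (0 : ℝ) 1,
      algebraMap ℝ _ δ ≤ niKer (τ • evalM P s - (evalM C s)⁻¹) := by
  obtain ⟨δ, hδ, hleC⟩ := hC.exists_pos_eventually_algebraMap_le_niKer_neg_inv hω
  refine ⟨δ / 2, half_pos hδ, ?_⟩
  filter_upwards [nhdsWithin_le_nhds hleC, eventually_neg_le_niKer hP hω (half_pos hδ)]
    with s hCs hPs τ hτ
  calc algebraMap ℝ _ (δ / 2) ≤ algebraMap ℝ _ (τ * -(δ / 2) + δ) :=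
        algebraMap_mono _ (by nlinarith [hτ.2])
    _ = τ • algebraMap ℝ _ (-(δ / 2)) + algebraMap ℝ _ δ := by
        rw [map_add, map_mul, Algebra.smul_def]
    _ ≤ τ • niKer (evalM P s) + niKer (-(evalM C s)⁻¹) :=
        add_le_add (smul_le_smul_of_nonneg_left hPs hτ.1) hCs
    _ = niKer (τ • evalM P s - (evalM C s)⁻¹) := by
        rw [sub_eq_add_neg, niKer_add, niKer_real_smul]

lemma homotopyRegular_mul_of_algebraMap_le_niKer {M N : Matrix (Fin n) (Fin n) ℂ} {δ : ℝ}
    (hδ : 0 < δ) (hN : N.det ≠ 0)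
    (hle : ∀ τ ∈ Set.Icc (0 : ℝ) 1, algebraMap ℝ _ δ ≤ niKer (τ • M - N⁻¹)) :
    HomotopyRegular (M * N) := by
  intro τ hτ
  have hfactor : 1 - τ • (M * N) = -(τ • M - N⁻¹) * N := by
    rw [neg_sub, sub_mul, nonsing_inv_mul _ hN.isUnit, smul_mul_assoc]
  rw [hfactor, det_mul, det_neg]
  exact mul_ne_zero (mul_ne_zero (by simp)
    (isUnit_det_of_algebraMap_le_niKer hδ (hle τ hτ)).ne_zero) hN

lemma eventually_homotopyRegular_of_pos (hP : IsNI P) (hC : IsSNI C) (hω : 0 < ω) :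
    ∀ᶠ s in 𝓝[rightHalfPlane] jw ω, HomotopyRegular (evalM P s * evalM C s) := by
  obtain ⟨δ, hδ, hle⟩ := exists_pos_eventually_algebraMap_le_niKer_sub_inv hP hC hω
  filter_upwards [hle, hC.eventually_det_evalM_ne_zero hω] with s hs hCs using
    homotopyRegular_mul_of_algebraMap_le_niKer hδ hCs hs

lemma not_hasPole_inv_of_frequently_algebraMap_le_niKer {a : ℂ} {δ : ℝ} (hδ : 0 < δ)
    (hG : ∃ᶠ s in 𝓝[≠] a, ¬ HasPole G s ∧ algebraMap ℝ _ δ ≤ niKer (evalM G s)) :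
    IsUnit G.det ∧ ¬ HasPole G⁻¹ a := by
  have hdet {s} (hs : algebraMap ℝ _ δ ≤ niKer (evalM G s)) : (evalM G s).det ≠ 0 :=
    (isUnit_det_of_algebraMap_le_niKer hδ hs).ne_zero
  refine ⟨?_, fun ⟨i, j, hpole⟩ => not_isPoleAt_of_frequently_norm_le (B := 2 / δ) ?_ hpole⟩
  · obtain ⟨s, hreg, hs⟩ := hG.exists
    exact isUnit_det_of_det_evalM_ne_zero hreg (hdet hs)
  · refine hG.mono fun s ⟨hreg, hs⟩ => ?_
    calc ‖evalM G⁻¹ s i j‖ ≤ ‖evalM G⁻¹ s‖ := norm_apply_le_l2_opNorm _ i j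
      _ = ‖(evalM G s)⁻¹‖ := by rw [evalM_inv hreg (hdet hs)]
      _ ≤ 2 / δ := norm_inv_le_of_algebraMap_le_niKer hδ hs

lemma isUnit_det_sub_inv_and_not_hasPole (hP : IsNI P) (hC : IsSNI C) (hω : 0 < ω) :
    IsUnit (P - C⁻¹).det ∧ ¬ HasPole (P - C⁻¹)⁻¹ (jw ω) := by
  obtain ⟨δ, hδ, hle⟩ := exists_pos_eventually_algebraMap_le_niKer_sub_inv hP hC hω
  refine not_hasPole_inv_of_frequently_algebraMap_le_niKer hδ ?_
  have := nhdsWithin_rightHalfPlane_neBot (jw_re ω)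
  refine Frequently.filter_mono (Eventually.frequently ?_)
    (nhdsWithin_rightHalfPlane_le (jw_re ω))
  filter_upwards [hle, hC.eventually_det_evalM_ne_zero hω, self_mem_nhdsWithin]
    with s hs hCdet hs0
  have hCreg := hC.not_hasPole (le_of_lt hs0)
  have hCinv := not_hasPole_inv hCreg hCdet
  refine ⟨not_hasPole_sub (hP.not_hasPole hs0) hCinv, ?_⟩
  rw [evalM_sub (hP.not_hasPole hs0) hCinv, evalM_inv hCreg hCdet]
  simpa using hs 1 (Set.right_mem_Icc.2 zero_le_one)

lemma not_isPoleAt_closedLoop_of_pos (hP : IsNI P) (hC : IsSNI C) (hω : 0 < ω)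
    (i j : Fin n ⊕ Fin n) : ¬ IsPoleAt (closedLoop P C i j) (jw ω) := by
  have hCreg := hC.not_hasPole (jw_re ω).ge
  have hCdet := hC.det_evalM_ne_zero hω
  obtain ⟨hX, hXreg⟩ := isUnit_det_sub_inv_and_not_hasPole hP hC hω
  exact closedLoop_mem_matrix_of_inv_mem (isUnit_det_of_det_evalM_ne_zero hCreg hCdet) hX
    (not_hasPole_iff_mem.1 (not_hasPole_inv hCreg hCdet)) (not_hasPole_iff_mem.1 hXreg) i j

end ImaginaryAxis
/-! ### Stability of the feedback loop -/

section Stability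

variable {P C : Matrix (Fin n) (Fin n) (RatFunc ℝ)}

lemma conj_jw (ω : ℝ) : starRingEnd ℂ (jw ω) = jw (-ω) := by simp [jw]

lemma jw_im_of_re_eq_zero {s : ℂ} (hs : s.re = 0) : jw s.im = s :=
  Complex.ext (by simp [hs]) (by simp [jw])

lemma tendsto_conj_nhdsWithin_rightHalfPlane (s : ℂ) :
    Tendsto (starRingEnd ℂ) (𝓝[rightHalfPlane] s) (𝓝[rightHalfPlane] (starRingEnd ℂ s)) :=
  Complex.continuous_conj.continuousWithinAt.tendsto_nhdsWithin fun z (hz : 0 < z.re) =>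
    show 0 < (starRingEnd ℂ z).re by rwa [Complex.conj_re]

lemma homotopyRegular_evalM_of_conj {s : ℂ}
    (h : HomotopyRegular (evalM P (starRingEnd ℂ s) * evalM C (starRingEnd ℂ s))) :
    HomotopyRegular (evalM P s * evalM C s) := by
  have hmap := h.map (φ := Complex.conjAe.toAlgHom) Complex.conjAe.injective
  rw [Matrix.map_mul] at hmap
  rw [← Complex.conj_conj s, evalM_conj P, evalM_conj C]
  exact hmap

lemma eventually_homotopyRegular_nhds_zero (hP : ¬ HasPole P 0) (hC : ¬ HasPole C 0)
    (h0 : HomotopyRegular (evalR P 0 * evalR C 0)) :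
    ∀ᶠ s in 𝓝 0, HomotopyRegular (evalM P s * evalM C s) := by
  refine HomotopyRegular.eventually_of_tendsto ?_
    ((continuousAt_evalM hP).mul (continuousAt_evalM hC)).tendsto
  have hmap := h0.map (φ := Complex.ofRealAm) Complex.ofReal_injective
  rw [Matrix.map_mul] at hmap
  have hval (G : Matrix (Fin n) (Fin n) (RatFunc ℝ)) :
      evalM G 0 = (evalR G 0).map Complex.ofReal := by
    rw [← evalM_ofReal, Complex.ofReal_zero]
  change HomotopyRegular (evalM P 0 * evalM C 0)
  rw [hval, hval]
  exact hmap

lemma eventually_homotopyRegular_cobounded (hP : Proper P) (hC : Proper C)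
    (hinf : HomotopyRegular (evalInf P * evalInf C)) :
    ∀ᶠ s in Bornology.cobounded ℂ, HomotopyRegular (evalM P s * evalM C s) := by
  refine HomotopyRegular.eventually_of_tendsto ?_
    ((tendsto_evalM_cobounded hP).mul (tendsto_evalM_cobounded hC))
  have hmap := hinf.map (φ := Complex.ofRealAm) Complex.ofReal_injective
  rw [Matrix.map_mul] at hmap
  exact hmap

lemma eventually_homotopyRegular_of_re_eq_zero (hP : IsNI P) (hP0 : ¬ HasPole P 0)
    (hC : IsSNI C) (h0 : HomotopyRegular (evalR P 0 * evalR C 0)) {s : ℂ} (hs : s.re = 0) :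
    ∀ᶠ z in 𝓝[rightHalfPlane] s, HomotopyRegular (evalM P z * evalM C z) := by
  rw [← jw_im_of_re_eq_zero hs]
  rcases lt_trichotomy s.im 0 with hneg | hzero | hpos
  · have hconj := tendsto_conj_nhdsWithin_rightHalfPlane (jw s.im)
    rw [conj_jw] at hconj
    exact (hconj.eventually (eventually_homotopyRegular_of_pos hP hC (neg_pos.2 hneg))).mono
      fun z => homotopyRegular_evalM_of_conj
  · have hjw : jw s.im = 0 := by simp [jw, hzero]
    rw [hjw]
    exact nhdsWithin_le_nhds
      (eventually_homotopyRegular_nhds_zero hP0 (hC.not_hasPole le_rfl) h0)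
  · exact eventually_homotopyRegular_of_pos hP hC hpos

lemma differentiableAt_matrix_det {m : Type*} [Fintype m] [DecidableEq m] {M : ℂ → Matrix m m ℂ}
    {s : ℂ} (hM : ∀ i j, DifferentiableAt ℂ (fun z => M z i j) s) :
    DifferentiableAt ℂ (fun z => (M z).det) s := by
  simp only [det_apply]
  fun_prop

lemma differentiableAt_det_one_sub_smul {s : ℂ} (hP : ¬ HasPole P s) (hC : ¬ HasPole C s) (τ : ℝ) :
    DifferentiableAt ℂ (fun z => (1 - τ • (evalM P z * evalM C z)).det) s := by
  have hPd := differentiableAt_evalM_apply hP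
  have hCd := differentiableAt_evalM_apply hC
  refine differentiableAt_matrix_det fun i j => ?_
  simp only [Matrix.sub_apply, Matrix.smul_apply, mul_apply]
  fun_prop

lemma continuousAt_det_one_sub_smul {s : ℂ} (hP : ¬ HasPole P s) (hC : ¬ HasPole C s) (τ : ℝ) :
    ContinuousAt (fun q : ℝ × ℂ => (1 - q.1 • (evalM P q.2 * evalM C q.2)).det) (τ, s) := by
  have hPc : ContinuousAt (fun q : ℝ × ℂ => evalM P q.2) (τ, s) :=
    (continuousAt_evalM hP).comp_of_eq continuousAt_snd rfl
  have hCc : ContinuousAt (fun q : ℝ × ℂ => evalM C q.2) (τ, s) :=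
    (continuousAt_evalM hC).comp_of_eq continuousAt_snd rfl
  exact continuous_id.matrix_det.continuousAt.comp
    (continuousAt_const.sub (continuousAt_fst.smul (hPc.mul hCc)))

theorem homotopyRegular_of_mem_rightHalfPlane (hP : IsNI P) (hP0 : ¬ HasPole P 0) (hC : IsSNI C)
    (h0 : HomotopyRegular (evalR P 0 * evalR C 0))
    (hinf : HomotopyRegular (evalInf P * evalInf C)) {s : ℂ} (hs : s ∈ rightHalfPlane) :
    HomotopyRegular (evalM P s * evalM C s) := by
  let F : unitInterval → ℂ → ℂ := fun τ s => (1 - (τ : ℝ) • (evalM P s * evalM C s)).det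
  have hPreg {s} (hs : s ∈ rightHalfPlane) : ¬ HasPole P s := hP.not_hasPole hs
  have hCreg {s} (hs : s ∈ rightHalfPlane) : ¬ HasPole C s := hC.not_hasPole (le_of_lt hs)
  have hcont : ContinuousOn F.uncurry (Set.univ ×ˢ rightHalfPlane) := fun ⟨τ, s⟩ ⟨_, hs⟩ =>
    ((continuousAt_det_one_sub_smul (hPreg hs) (hCreg hs) τ).comp_of_eq
      (continuous_subtype_val.prodMap continuous_id).continuousAt rfl).continuousWithinAt
  have hdiff (τ) : DifferentiableOn ℂ (F τ) rightHalfPlane := fun s hs =>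
    (differentiableAt_det_one_sub_smul (hPreg hs) (hCreg hs) τ).differentiableWithinAt
  have hfar : ∀ᶠ s in Bornology.cobounded ℂ, ∀ τ, F τ s ≠ 0 :=
    (eventually_homotopyRegular_cobounded hP.1 hC.1.1 hinf).mono fun s hs τ => hs τ τ.2
  have haxis (s) (hs : s ∈ frontier rightHalfPlane) :
      ∀ᶠ z in 𝓝[rightHalfPlane] s, ∀ τ, F τ z ≠ 0 := by
    rw [frontier_rightHalfPlane] at hs
    exact (eventually_homotopyRegular_of_re_eq_zero hP hP0 hC h0 hs).mono fun s hs τ => hs τ τ.2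
  have hzero := forall_ne_zero_of_forall_mem_frontier (t₀ := 0) isOpen_rightHalfPlane hcont hdiff
    hfar haxis (by simp [F])
  exact fun τ hτ => hzero ⟨τ, hτ⟩ s hs

lemma not_isPoleAt_closedLoop_of_re_eq_zero (hP : IsNI P) (hP0 : ¬ HasPole P 0) (hC : IsSNI C)
    (h0 : HomotopyRegular (evalR P 0 * evalR C 0)) {s : ℂ} (hs : s.re = 0)
    (i j : Fin n ⊕ Fin n) : ¬ IsPoleAt (closedLoop P C i j) s := by
  rw [← jw_im_of_re_eq_zero hs]
  rcases lt_trichotomy s.im 0 with hneg | hzero | hpos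
  · rw [← neg_neg s.im, ← conj_jw, isPoleAt_conj]
    exact not_isPoleAt_closedLoop_of_pos hP hC (neg_pos.2 hneg) i j
  · have hjw : jw s.im = 0 := by simp [jw, hzero]
    rw [hjw]
    exact not_isPoleAt_closedLoop hP0 (hC.not_hasPole le_rfl)
      (eventually_homotopyRegular_nhds_zero hP0 (hC.not_hasPole le_rfl)
        h0).self_of_nhds.det_one_sub_ne_zero i j
  · exact not_isPoleAt_closedLoop_of_pos hP hC hpos i j

theorem feedback_stability_sufficient_general (hP : IsNI P) (hP0 : ¬ HasPole P 0) (hC : IsSNI C)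
    (h0 : ∀ μ ∈ spectrum ℝ (evalR P 0 * evalR C 0), μ < 1)
    (hinf : ∀ μ ∈ spectrum ℝ (evalInf P * evalInf C), μ < 1) : FeedbackStable P C := by
  replace h0 := homotopyRegular_of_forall_mem_spectrum_lt_one h0
  replace hinf := homotopyRegular_of_forall_mem_spectrum_lt_one hinf
  obtain ⟨hdet, hproper⟩ := det_ne_zero_and_closedLoop_mem_properSubring hP.1 hC.1.1
    hinf.det_one_sub_ne_zero
  refine ⟨hdet, fun i j => mem_properSubring.1 (hproper i j), fun s hs i j => ?_⟩
  rcases hs.eq_or_lt with hs | hs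
  · exact not_isPoleAt_closedLoop_of_re_eq_zero hP hP0 hC h0 hs.symm i j
  · exact not_isPoleAt_closedLoop (hP.not_hasPole hs) (hC.not_hasPole hs.le)
      (homotopyRegular_of_mem_rightHalfPlane hP hP0 hC h0 hinf hs).det_one_sub_ne_zero i j

lemma maxEigLT.lt_of_mem_spectrum {M : Matrix (Fin n) (Fin n) ℝ} {c μ : ℝ} (hM : maxEigLT M c)
    (hμ : μ ∈ spectrum ℝ M) : μ < c := by
  rw [mem_spectrum_iff_isRoot_charpoly] at hμ
  have hmem : (μ : ℂ) ∈ spectrum ℂ (M.map Complex.ofReal) := by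
    have hroot := hμ.map (f := Complex.ofRealHom)
    rw [← charpoly_map] at hroot
    exact mem_spectrum_iff_isRoot_charpoly.2 hroot
  simpa using (hM _ hmem).2

end Stability

/-- sufficient eigenvalue conditions for feedback stability. -/
theorem feedback_stability_sufficient {n : ℕ} (P C : Matrix (Fin n) (Fin n) (RatFunc ℝ))
    (hP : IsNI P) (hP0 : ¬ HasPole P 0) (hC : IsSNI C)
    (hsgn : (evalInf P).PosSemidef ∨ (evalInf C).PosSemidef)
    (h0 : maxEigLT (evalR P 0 * evalR C 0) 1)
    (hinf : maxEigLT (evalInf P * evalInf C) 1) :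
    FeedbackStable P C :=
  feedback_stability_sufficient_general hP hP0 hC (fun _ => h0.lt_of_mem_spectrum)
    fun _ => hinf.lt_of_mem_spectrum

end NIControl
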